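/- (Clarkson inequality for Schatten classes, case 2 ≤ p < ∞.) Let 2 ≤ p < ∞ and q = p/(p−1). For all T₁, T₂ in the Schatten class S_p(H) one has (‖T₁ + T₂‖_p^p + ‖T₁ − T₂‖_p^p)^{1/p} ≤ 2^{1/p} (‖T₁‖_p^q + ‖T₂‖_p^q)^{1/q}. -/

import Mathlib

open scoped InnerProductSpace ENNReal Topology
open Filter

/-- An Orlicz function (N-function): convex, nondecreasing and continuous on `[0, ∞)`,
vanishing at `0`, positive on `(0, ∞)` and tending to `∞` at `∞`. -/
structure OrliczFunction : Type where
  toFun : ℝ → ℝ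
  convexOn : ConvexOn ℝ (Set.Ici (0 : ℝ)) toFun
  monotoneOn : MonotoneOn toFun (Set.Ici (0 : ℝ))
  continuousOn : ContinuousOn toFun (Set.Ici (0 : ℝ))
  map_zero : toFun 0 = 0
  pos : ∀ x : ℝ, 0 < x → 0 < toFun x
  tendsto_atTop : Filter.Tendsto toFun Filter.atTop Filter.atTop

/-- `ψ` is the complementary N-function of `φ`: `ψ(y) = sup {x·y − φ(x) : x ≥ 0}`. -/
def OrliczFunction.IsComplementary (φ ψ : OrliczFunction) : Prop :=
  ∀ y : ℝ, 0 ≤ y → ψ.toFun y = sSup {v : ℝ | ∃ x : ℝ, 0 ≤ x ∧ v = x * y - φ.toFun x}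

/-- `g` is the (two-sided) inverse of `f` on `[0, ∞)`, taking nonnegative values. -/
def IsOrliczInverse (g f : ℝ → ℝ) : Prop :=
  (∀ u : ℝ, 0 ≤ u → 0 ≤ g u) ∧ (∀ u : ℝ, 0 ≤ u → f (g u) = u) ∧
    ∀ u : ℝ, 0 ≤ u → g (f u) = u

variable {H : Type} [NormedAddCommGroup H] [InnerProductSpace ℂ H] [CompleteSpace H]

/-- The `n`-th singular value of an operator `T` (indexed from `n = 0`), described as the
`n`-th approximation number: the distance from `T` to the operators of rank `≤ n`.  For a
compact operator on a Hilbert space this is exactly the `(n+1)`-st eigenvalue of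
`|T| = (T*T)^(1/2)` in decreasing order. -/
noncomputable def sValue (T : H →L[ℂ] H) (n : ℕ) : ℝ :=
  sInf {c : ℝ | ∃ F : H →L[ℂ] H,
    Module.rank ℂ (LinearMap.range F.toLinearMap) ≤ (n : Cardinal) ∧ c = ‖T - F‖}

/-- `tr(φ(|T|)) = Σ_n φ(s_n(T))`. -/
noncomputable def orliczSum (φ : OrliczFunction) (T : H →L[ℂ] H) : ℝ :=
  ∑' n : ℕ, φ.toFun (sValue T n)

/-- Membership in the noncommutative Orlicz sequence space `S_φ(H)`:
`T` is compact and `Σ_n φ(λ s_n(T)) < ∞` for some `λ > 0`. -/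
def MemS (φ : OrliczFunction) (T : H →L[ℂ] H) : Prop :=
  IsCompactOperator (⇑T) ∧
    ∃ l : ℝ, 0 < l ∧ Summable fun n : ℕ => φ.toFun (l * sValue T n)

/-- The Luxemburg norm `‖T‖_(φ) = inf {λ > 0 : Σ_n φ(s_n(T)/λ) ≤ 1}`. -/
noncomputable def luxNorm (φ : OrliczFunction) (T : H →L[ℂ] H) : ℝ :=
  sInf {l : ℝ | 0 < l ∧ (Summable fun n : ℕ => φ.toFun (sValue T n / l)) ∧
    ∑' n : ℕ, φ.toFun (sValue T n / l) ≤ 1}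

/-- The Orlicz norm `‖T‖_φ = sup {tr |TB| : tr(ψ(B)) ≤ 1}`, expressed through the
complementary function `ψ` of `φ` (here `tr|TB| = Σ_n s_n(TB)`). -/
noncomputable def orlNormVia (ψ : OrliczFunction) (T : H →L[ℂ] H) : ℝ :=
  sSup {c : ℝ | ∃ B : H →L[ℂ] H, IsCompactOperator (⇑B) ∧
    (Summable fun n : ℕ => ψ.toFun (sValue B n)) ∧
    (∑' n : ℕ, ψ.toFun (sValue B n)) ≤ 1 ∧ c = ∑' n : ℕ, sValue (T ∘L B) n}

/-- The norm `‖T‖_((φ),p) = (‖T₁‖_(φ₁)^p + ‖T₂‖_(φ₂)^p)^(1/p)` on 2-tuples. -/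
noncomputable def luxNorm2 (φ₁ φ₂ : OrliczFunction) (p : ℝ) (T₁ T₂ : H →L[ℂ] H) : ℝ :=
  (luxNorm φ₁ T₁ ^ p + luxNorm φ₂ T₂ ^ p) ^ (1 / p)

/-- The Orlicz-type norm `‖T‖_(φ,p) = (‖T₁‖_φ₁^p + ‖T₂‖_φ₂^p)^(1/p)` on 2-tuples,
where the Orlicz norms are computed via the complementary functions `ψ₁, ψ₂`. -/
noncomputable def orlNorm2 (ψ₁ ψ₂ : OrliczFunction) (p : ℝ) (T₁ T₂ : H →L[ℂ] H) : ℝ :=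
  (orlNormVia ψ₁ T₁ ^ p + orlNormVia ψ₂ T₂ ^ p) ^ (1 / p)

/-- 2-tuple Luxemburg norm for an exponent `r ∈ [1, ∞]`. -/
noncomputable def luxNorm2E (φ₁ φ₂ : OrliczFunction) (r : ℝ≥0∞) (T₁ T₂ : H →L[ℂ] H) : ℝ :=
  if r = ⊤ then max (luxNorm φ₁ T₁) (luxNorm φ₂ T₂)
  else (luxNorm φ₁ T₁ ^ r.toReal + luxNorm φ₂ T₂ ^ r.toReal) ^ (1 / r.toReal)

/-- The trace of an operator, computed along a Hilbert basis. -/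
noncomputable def traceAlong {ι : Type} (b : HilbertBasis ι ℂ H) (T : H →L[ℂ] H) : ℂ :=
  ∑' i : ι, ⟪b i, T (b i)⟫_ℂ

/-- The Schatten `p`-norm `‖T‖_p = (Σ_n s_n(T)^p)^(1/p)`. -/
noncomputable def schattenNorm (p : ℝ) (T : H →L[ℂ] H) : ℝ :=
  (∑' n : ℕ, sValue T n ^ p) ^ (1 / p)

/-- Membership in the Schatten class `S_p(H)`. -/
def MemSp (p : ℝ) (T : H →L[ℂ] H) : Prop :=
  IsCompactOperator (⇑T) ∧ Summable fun n : ℕ => sValue T n ^ p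

/-- The nonsquare constant `J` of the noncommutative Orlicz space `S_φ(H)`
(with the Luxemburg norm). -/
noncomputable def JOrlicz (φ : OrliczFunction) : ℝ :=
  sSup {c : ℝ | ∃ T B : H →L[ℂ] H, MemS φ T ∧ MemS φ B ∧
    luxNorm φ T = 1 ∧ luxNorm φ B = 1 ∧
    c = min (luxNorm φ (T + B)) (luxNorm φ (T - B))}

/-- The von Neumann–Jordan constant of `S_φ(H)` (with the Luxemburg norm): the smallest
`c > 0` such that `1/c ≤ (‖x+y‖² + ‖x−y‖²)/(2(‖x‖² + ‖y‖²)) ≤ c` for all `x, y` in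
`S_φ(H)` not both zero. -/
noncomputable def cNJOrlicz (φ : OrliczFunction) : ℝ :=
  sInf {c : ℝ | 0 < c ∧ ∀ T B : H →L[ℂ] H, MemS φ T → MemS φ B → ¬(T = 0 ∧ B = 0) →
    1 / c ≤ (luxNorm φ (T + B) ^ 2 + luxNorm φ (T - B) ^ 2) /
        (2 * (luxNorm φ T ^ 2 + luxNorm φ B ^ 2)) ∧
      (luxNorm φ (T + B) ^ 2 + luxNorm φ (T - B) ^ 2) /
        (2 * (luxNorm φ T ^ 2 + luxNorm φ B ^ 2)) ≤ c}

/-- The von Neumann–Jordan constant of the Schatten class `S_p(H)`. -/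
noncomputable def cNJSchatten (p : ℝ) : ℝ :=
  sInf {c : ℝ | 0 < c ∧ ∀ T B : H →L[ℂ] H, MemSp p T → MemSp p B → ¬(T = 0 ∧ B = 0) →
    1 / c ≤ (schattenNorm p (T + B) ^ 2 + schattenNorm p (T - B) ^ 2) /
        (2 * (schattenNorm p T ^ 2 + schattenNorm p B ^ 2)) ∧
      (schattenNorm p (T + B) ^ 2 + schattenNorm p (T - B) ^ 2) /
        (2 * (schattenNorm p T ^ 2 + schattenNorm p B ^ 2)) ≤ c}

/-- The entire function `w ↦ t ^ w`, set to zero when `t = 0`. -/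
noncomputable def entirePow (t : ℝ) (w : ℂ) : ℂ :=
  if t = 0 then 0 else Complex.exp (w * Real.log t)

lemma differentiable_entirePow (t : ℝ) : Differentiable ℂ (entirePow t) := by
  unfold entirePow
  split_ifs <;> fun_prop

lemma norm_entirePow_le {t : ℝ} (ht : 0 ≤ t) (w : ℂ) : ‖entirePow t w‖ ≤ t ^ w.re := by
  unfold entirePow
  split_ifs with h
  · simpa using Real.rpow_nonneg ht _
  · rw [Complex.norm_exp, Real.rpow_def_of_pos (lt_of_le_of_ne ht (Ne.symm h))]
    simp [mul_comm]

lemma entirePow_ofReal {t : ℝ} (ht : 0 ≤ t) {r : ℝ} (hr : r ≠ 0) :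
    entirePow t r = ((t ^ r : ℝ) : ℂ) := by
  unfold entirePow
  split_ifs with h
  · simp [h, Real.zero_rpow hr]
  · rw [Real.rpow_def_of_pos (lt_of_le_of_ne ht (Ne.symm h))]
    push_cast
    rw [mul_comm]

/-- A bound for `entirePow t` on the strip where the real part lies in `[0, r]`. -/
lemma norm_entirePow_le_of_re_mem {t r : ℝ} (ht : 0 ≤ t) {w : ℂ} (h0 : 0 ≤ w.re)
    (h1 : w.re ≤ r) : ‖entirePow t w‖ ≤ (1 + t) ^ r :=
  (norm_entirePow_le ht w).trans <|
    (Real.rpow_le_rpow ht (by linarith) h0).trans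
      (Real.rpow_le_rpow_of_exponent_le (by linarith) h1)

open Complex.HadamardThreeLines in
/-- An analytic family through a nonnegative vector `a`, adapted to interpolation between the
`ℓ^∞` norm (left edge) and the `ℓ^2` norm (right edge). -/
lemma exists_analytic_family {ι : Type*} [Fintype ι] {p q : ℝ} (hp : 2 ≤ p)
    (hq : q = p / (p - 1)) {a : ι → ℝ} (ha : ∀ i, 0 ≤ a i) :
    ∃ f : ι → ℂ → ℂ, (∀ i, Differentiable ℂ (f i)) ∧
      (∃ C : ℝ, ∀ i, ∀ z ∈ verticalClosedStrip 0 1, ‖f i z‖ ≤ C) ∧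
      (∀ i, f i ((2 / p : ℝ) : ℂ) = a i) ∧
      (∀ z : ℂ, z.re = 0 → ∀ i, ‖f i z‖ ≤ (∑ i, a i ^ p) ^ (q / p)) ∧
      (∀ z : ℂ, z.re = 1 → ∑ i, ‖f i z‖ ^ 2 ≤ (∑ i, a i ^ p) ^ (q / p)) := by
  have hp0 : 0 < p := by linarith
  have hq0 : 0 < q := by rw [hq]; exact div_pos hp0 (by linarith)
  have hsum : 0 ≤ ∑ i, a i ^ p := Finset.sum_nonneg fun i _ => Real.rpow_nonneg (ha i) _
  rcases hsum.eq_or_lt with h | h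
  · have ha0 : ∀ i, a i = 0 := by
      intro i
      have := (Finset.sum_eq_zero_iff_of_nonneg
        (fun i _ => Real.rpow_nonneg (ha i) p)).1 h.symm i (Finset.mem_univ i)
      exact ((Real.rpow_eq_zero_iff_of_nonneg (ha i)).1 this).1
    refine ⟨fun _ _ => 0, fun i => by fun_prop, ⟨0, by simp⟩, by simp [ha0], ?_, ?_⟩
    · intro z _ i
      simpa using Real.rpow_nonneg hsum _
    · intro z _
      simpa using Real.rpow_nonneg hsum _
  set s := ∑ i, a i ^ p with hs
  set α := s ^ (1 / p) with hα
  have hα0 : 0 < α := Real.rpow_pos_of_pos h _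
  have hαp : α ^ p = s := by rw [hα, ← Real.rpow_mul h.le]; field_simp; simp
  have hαq : α ^ q = s ^ (q / p) := by rw [hα, ← Real.rpow_mul h.le]; congr 1; field_simp
  have hdiv : ∀ i, 0 ≤ a i / α := fun i => div_nonneg (ha i) hα0.le
  refine ⟨fun i z => entirePow α (q * (1 - z / 2)) * entirePow (a i / α) (p * z / 2),
    ?_, ?_, ?_, ?_, ?_⟩
  · intro i
    have h1 : Differentiable ℂ fun z : ℂ => (q : ℂ) * (1 - z / 2) := by fun_prop
    have h2 : Differentiable ℂ fun z : ℂ => (p : ℂ) * z / 2 := by fun_prop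
    exact ((differentiable_entirePow α).comp h1).mul ((differentiable_entirePow _).comp h2)
  · refine ⟨∑ i, (1 + α) ^ q * (1 + a i / α) ^ p, fun i z hz => ?_⟩
    have hz' : 0 ≤ z.re ∧ z.re ≤ 1 := hz
    refine le_trans ?_ (Finset.single_le_sum (f := fun i => (1 + α) ^ q * (1 + a i / α) ^ p)
      (fun j _ => ?_) (Finset.mem_univ i))
    · rw [norm_mul]
      gcongr
      · refine norm_entirePow_le_of_re_mem hα0.le ?_ ?_ <;> simp <;> nlinarith
      · refine norm_entirePow_le_of_re_mem (hdiv i) ?_ ?_ <;> simp <;> nlinarith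
    · have := hdiv j
      positivity
  · intro i
    have e1 : (q : ℂ) * (1 - ((2 / p : ℝ) : ℂ) / 2) = ((1 : ℝ) : ℂ) := by
      have : q * (1 - (2 / p) / 2) = 1 := by
        have : p - 1 ≠ 0 := by linarith
        rw [hq]; field_simp
      rw [← this]; push_cast; ring
    have e2 : (p : ℂ) * ((2 / p : ℝ) : ℂ) / 2 = ((1 : ℝ) : ℂ) := by
      have : p * (2 / p) / 2 = 1 := by field_simp
      rw [← this]; push_cast; ring
    simp only [e1, e2]
    rw [entirePow_ofReal hα0.le one_ne_zero, entirePow_ofReal (hdiv i) one_ne_zero]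
    simp only [Real.rpow_one]
    rw [← Complex.ofReal_mul, mul_div_cancel₀ _ hα0.ne']
  · intro z hz i
    rw [norm_mul, ← hαq, ← mul_one (α ^ q)]
    gcongr
    · refine (norm_entirePow_le hα0.le _).trans ?_
      simp [hz]
    · refine (norm_entirePow_le (hdiv i) _).trans ?_
      simp [hz]
  · intro z hz
    have key : ∀ i, ‖entirePow α (q * (1 - z / 2)) * entirePow (a i / α) (p * z / 2)‖ ^ 2 ≤
        α ^ q * (a i ^ p / s) := by
      intro i
      rw [norm_mul, mul_pow]
      gcongr
      · calc _ ≤ (α ^ (q / 2)) ^ 2 := by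
              gcongr
              refine (norm_entirePow_le hα0.le _).trans (le_of_eq ?_)
              congr 1
              simp [hz]; ring
          _ = α ^ q := by rw [← Real.rpow_natCast, ← Real.rpow_mul hα0.le]; congr 1; simp
      · calc _ ≤ ((a i / α) ^ (p / 2)) ^ 2 := by
              gcongr
              refine (norm_entirePow_le (hdiv i) _).trans (le_of_eq ?_)
              congr 1
              simp [hz]
          _ = (a i / α) ^ p := by
              rw [← Real.rpow_natCast, ← Real.rpow_mul (hdiv i)]; congr 1; simp
          _ = a i ^ p / s := by rw [Real.div_rpow (ha i) hα0.le, hαp]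
    refine (Finset.sum_le_sum fun i _ => key i).trans (le_of_eq ?_)
    rw [← Finset.mul_sum, ← Finset.sum_div, ← hs, div_self h.ne', mul_one, hαq]

open Complex.HadamardThreeLines in
/-- A dual analytic family for a complex vector `c`, adapted to interpolation between the
`ℓ^1` norm (left edge) and the `ℓ^2` norm (right edge). -/
lemma exists_dual_analytic_family {κ : Type*} [Fintype κ] {p : ℝ} (hp : 2 ≤ p) (c : κ → ℂ) :
    ∃ x : κ → ℂ → ℂ, (∀ k, Differentiable ℂ (x k)) ∧
      (∃ C : ℝ, ∀ k, ∀ z ∈ verticalClosedStrip 0 1, ‖x k z‖ ≤ C) ∧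
      (∀ k, x k ((2 / p : ℝ) : ℂ) * c k = ((‖c k‖ ^ p : ℝ) : ℂ)) ∧
      (∀ z : ℂ, z.re = 0 → ∑ k, ‖x k z‖ ≤ ∑ k, ‖c k‖ ^ p) ∧
      (∀ z : ℂ, z.re = 1 → ∑ k, ‖x k z‖ ^ 2 ≤ ∑ k, ‖c k‖ ^ p) := by
  have hp0 : 0 < p := by linarith
  let w : κ → ℂ := fun k => (starRingEnd ℂ) (c k) / ‖c k‖
  have hw : ∀ k, ‖w k‖ ≤ 1 := fun k => by
    simp only [w, norm_div, RCLike.norm_conj, Complex.norm_real, norm_norm]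
    exact div_self_le_one _
  have hwc : ∀ k, w k * c k = ‖c k‖ := fun k => by
    by_cases h : c k = 0
    · simp [h]
    have : (‖c k‖ : ℂ) ≠ 0 := by simpa using h
    simp only [w]
    rw [div_mul_eq_mul_div, div_eq_iff this, Complex.conj_mul', sq]
  have hle : ∀ k z, ‖w k * entirePow ‖c k‖ (p * (1 - z / 2))‖ ≤
      ‖entirePow ‖c k‖ (p * (1 - z / 2))‖ := fun k z => by
    rw [norm_mul]
    exact mul_le_of_le_one_left (norm_nonneg _) (hw k)
  refine ⟨fun k z => w k * entirePow ‖c k‖ (p * (1 - z / 2)), ?_, ?_, ?_, ?_, ?_⟩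
  · intro k
    have h1 : Differentiable ℂ fun z : ℂ => (p : ℂ) * (1 - z / 2) := by fun_prop
    exact ((differentiable_entirePow _).comp h1).const_mul _
  · refine ⟨∑ k, (1 + ‖c k‖) ^ p, fun k z hz => ?_⟩
    have hz' : 0 ≤ z.re ∧ z.re ≤ 1 := hz
    refine le_trans ?_ (Finset.single_le_sum (f := fun k => (1 + ‖c k‖) ^ p)
      (fun j _ => by positivity) (Finset.mem_univ k))
    refine (hle k z).trans (norm_entirePow_le_of_re_mem (norm_nonneg _) ?_ ?_) <;> simp <;>
      nlinarith
  · intro k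
    have e1 : (p : ℂ) * (1 - ((2 / p : ℝ) : ℂ) / 2) = ((p - 1 : ℝ) : ℂ) := by
      have : p * (1 - (2 / p) / 2) = p - 1 := by field_simp
      rw [← this]; push_cast; ring
    simp only [e1]
    rw [entirePow_ofReal (norm_nonneg _) (by linarith), mul_right_comm, hwc, ← Complex.ofReal_mul]
    congr 1
    by_cases h : c k = 0
    · simp [h, Real.zero_rpow hp0.ne']
    · rw [Real.rpow_sub_one (by simpa using h)]
      field_simp
  · intro z hz
    refine Finset.sum_le_sum fun k _ => (hle k z).trans ?_
    refine (norm_entirePow_le (norm_nonneg _) _).trans (le_of_eq ?_)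
    simp [hz]
  · intro z hz
    refine Finset.sum_le_sum fun k _ => ?_
    calc _ ≤ (‖c k‖ ^ (p / 2)) ^ 2 := by
          gcongr
          refine (hle k z).trans ((norm_entirePow_le (norm_nonneg _) _).trans (le_of_eq ?_))
          congr 1
          simp [hz]; ring
      _ = ‖c k‖ ^ p := by
          rw [← Real.rpow_natCast, ← Real.rpow_mul (norm_nonneg _)]; congr 1; simp

open Complex.HadamardThreeLines in
/-- **Riesz–Thorin interpolation** for a matrix acting on pairs of vectors: a bound `α + β` from
`ℓ^1(ℓ^∞, ℓ^∞)` to `ℓ^∞` and a bound `√2` from `ℓ^2` to `ℓ^2` give the Clarkson bound from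
`ℓ^q(ℓ^p, ℓ^p)` to `ℓ^p`. -/
lemma sum_norm_rpow_le_of_interpolation {ι κ : Type*} [Fintype ι] [Fintype κ] (P Q : κ → ι → ℂ)
    (hinf : ∀ (a b : ι → ℂ) (α β : ℝ), (∀ i, ‖a i‖ ≤ α) → (∀ i, ‖b i‖ ≤ β) →
      ∀ k, ‖∑ i, P k i * a i + ∑ i, Q k i * b i‖ ≤ α + β)
    (htwo : ∀ a b : ι → ℂ, ∑ k, ‖∑ i, P k i * a i + ∑ i, Q k i * b i‖ ^ 2 ≤
      2 * (∑ i, ‖a i‖ ^ 2 + ∑ i, ‖b i‖ ^ 2))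
    {p q : ℝ} (hp : 2 ≤ p) (hq : q = p / (p - 1)) (a b : ι → ℝ) (ha : ∀ i, 0 ≤ a i)
    (hb : ∀ i, 0 ≤ b i) :
    ∑ k, ‖∑ i, P k i * a i + ∑ i, Q k i * b i‖ ^ p ≤
      2 * ((∑ i, a i ^ p) ^ (q / p) + (∑ i, b i ^ p) ^ (q / p)) ^ (p / q) := by
  have hp0 : 0 < p := by linarith
  have hq0 : 0 < q := by rw [hq]; exact div_pos hp0 (by linarith)
  obtain ⟨f, hfd, ⟨Cf, hfC⟩, hf, hf0, hf1⟩ := exists_analytic_family hp hq ha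
  obtain ⟨g, hgd, ⟨Cg, hgC⟩, hg, hg0, hg1⟩ := exists_analytic_family hp hq hb
  obtain ⟨x, hxd, ⟨Cx, hxC⟩, hx, hx0, hx1⟩ := exists_dual_analytic_family hp
    fun k => ∑ i, P k i * a i + ∑ i, Q k i * b i
  set S := ∑ k, ‖∑ i, P k i * a i + ∑ i, Q k i * b i‖ ^ p with hS
  set N := (∑ i, a i ^ p) ^ (q / p) + (∑ i, b i ^ p) ^ (q / p) with hN
  have hN0 : 0 ≤ N := add_nonneg
    (Real.rpow_nonneg (Finset.sum_nonneg fun i _ => Real.rpow_nonneg (ha i) _) _)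
    (Real.rpow_nonneg (Finset.sum_nonneg fun i _ => Real.rpow_nonneg (hb i) _) _)
  have hS0 : 0 ≤ S := Finset.sum_nonneg fun k _ => Real.rpow_nonneg (norm_nonneg _) _
  let F : ℂ → ℂ := fun z => ∑ k, x k z * (∑ i, P k i * f i z + ∑ i, Q k i * g i z)
  have hF : F ((2 / p : ℝ) : ℂ) = (S : ℂ) := by
    simp only [F, hf, hg, hx, hS]
    push_cast
    rfl
  have hmem : ((2 / p : ℝ) : ℂ) ∈ verticalClosedStrip 0 1 := by
    constructor
    · simp; positivity
    · simp; rw [div_le_one hp0]; exact hp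
  have hdiff : Differentiable ℂ F := by
    refine Differentiable.fun_sum fun k _ => (hxd k).mul (Differentiable.add ?_ ?_)
    · exact Differentiable.fun_sum fun i _ => (hfd i).const_mul _
    · exact Differentiable.fun_sum fun i _ => (hgd i).const_mul _
  have hbdd : BddAbove ((norm ∘ F) '' verticalClosedStrip 0 1) := by
    refine ⟨∑ k, Cx * (∑ i, ‖P k i‖ * Cf + ∑ i, ‖Q k i‖ * Cg), ?_⟩
    rintro _ ⟨z, hz, rfl⟩
    refine (norm_sum_le _ _).trans (Finset.sum_le_sum fun k _ => ?_)
    rw [norm_mul]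
    refine mul_le_mul (hxC k z hz) ?_ (norm_nonneg _) ((norm_nonneg _).trans (hxC k z hz))
    refine (norm_add_le _ _).trans (add_le_add ?_ ?_)
    · refine (norm_sum_le _ _).trans (Finset.sum_le_sum fun i _ => ?_)
      rw [norm_mul]
      gcongr
      exact hfC i z hz
    · refine (norm_sum_le _ _).trans (Finset.sum_le_sum fun i _ => ?_)
      rw [norm_mul]
      gcongr
      exact hgC i z hz
  have hleft : ∀ z ∈ Complex.re ⁻¹' {0}, ‖F z‖ ≤ S * N := by
    intro z hz
    have hz : z.re = 0 := hz
    calc ‖F z‖ ≤ ∑ k, ‖x k z‖ * N := by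
          refine (norm_sum_le _ _).trans (Finset.sum_le_sum fun k _ => ?_)
          rw [norm_mul]
          gcongr
          exact hinf _ _ _ _ (hf0 z hz) (hg0 z hz) k
      _ ≤ S * N := by
          rw [← Finset.sum_mul]
          gcongr
          exact hx0 z hz
  have hright : ∀ z ∈ Complex.re ⁻¹' {1}, ‖F z‖ ≤ √(S * (2 * N)) := by
    intro z hz
    have hz : z.re = 1 := hz
    calc ‖F z‖ ≤ ∑ k, ‖x k z‖ * ‖∑ i, P k i * f i z + ∑ i, Q k i * g i z‖ := by
          refine (norm_sum_le _ _).trans (le_of_eq ?_)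
          simp only [norm_mul]
      _ ≤ √(∑ k, ‖x k z‖ ^ 2) * √(∑ k, ‖∑ i, P k i * f i z + ∑ i, Q k i * g i z‖ ^ 2) :=
          Real.sum_mul_le_sqrt_mul_sqrt _ _ _
      _ ≤ √S * √(2 * N) := by
          gcongr
          · exact hx1 z hz
          · refine (htwo _ _).trans ?_
            gcongr
            exact add_le_add (hf1 z hz) (hg1 z hz)
      _ = √(S * (2 * N)) := (Real.sqrt_mul hS0 _).symm
  have main := norm_le_interp_of_mem_verticalClosedStrip₀₁' F hmem hdiff.diffContOnCl hbdd
    hleft hright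
  rw [hF, Complex.norm_real, Real.norm_of_nonneg hS0, Complex.ofReal_re] at main
  rcases hS0.eq_or_lt with h | h
  · rw [← h]; positivity
  have e : (S * N) ^ (1 - 2 / p) * √(S * (2 * N)) ^ (2 / p) =
      S ^ (1 - 1 / p) * (N ^ (1 / q) * 2 ^ (1 / p)) := by
    have hq' : 1 / q = 1 - 1 / p := by rw [hq]; field_simp
    rcases hN0.eq_or_lt with hN' | hN'
    · have : 2 / p ≠ 0 := by positivity
      rw [← hN']
      simp [Real.zero_rpow this, Real.zero_rpow (inv_ne_zero hq0.ne')]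
    rw [Real.sqrt_eq_rpow, ← Real.rpow_mul (by positivity), Real.mul_rpow hS0 hN0,
      Real.mul_rpow hS0 (by positivity), Real.mul_rpow zero_le_two hN0, hq']
    have e1 : 1 / 2 * (2 / p) = 1 / p := by field_simp
    have e2 : 1 - 1 / p = (1 - 2 / p) + 1 / p := by ring
    rw [e1, e2, Real.rpow_add h, Real.rpow_add hN']
    ring
  rw [e] at main
  have h3 : S ^ (1 / p) ≤ N ^ (1 / q) * 2 ^ (1 / p) := by
    have h4 : S = S ^ (1 - 1 / p) * S ^ (1 / p) := by
      rw [← Real.rpow_add h]; simp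
    have h5 : 0 < S ^ (1 - 1 / p) := Real.rpow_pos_of_pos h _
    refine le_of_mul_le_mul_left ?_ h5
    rwa [← h4]
  have h6 := Real.rpow_le_rpow (by positivity) h3 hp0.le
  rw [← Real.rpow_mul hS0, Real.mul_rpow (by positivity) (by positivity),
    ← Real.rpow_mul hN0, ← Real.rpow_mul zero_le_two] at h6
  have e1 : 1 / p * p = 1 := by field_simp
  have e2 : 1 / q * p = p / q := by ring
  rw [e1, e2, Real.rpow_one, Real.rpow_one] at h6
  linarith

section ApproximationNumbers

variable {E K : Type} [NormedAddCommGroup E] [InnerProductSpace ℂ E]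
  [NormedAddCommGroup K] [InnerProductSpace ℂ K]

lemma sValue_le_norm_sub (T : E →L[ℂ] E) {n : ℕ} (F : E →L[ℂ] E)
    (hF : Module.rank ℂ (LinearMap.range F.toLinearMap) ≤ (n : Cardinal)) :
    sValue T n ≤ ‖T - F‖ :=
  csInf_le ⟨0, by rintro _ ⟨F, -, rfl⟩; exact norm_nonneg _⟩ ⟨F, hF, rfl⟩

lemma le_sValue {T : E →L[ℂ] E} {n : ℕ} {c : ℝ} (h : ∀ F : E →L[ℂ] E,
    Module.rank ℂ (LinearMap.range F.toLinearMap) ≤ (n : Cardinal) → c ≤ ‖T - F‖) :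
    c ≤ sValue T n := by
  refine le_csInf ⟨‖T - 0‖, 0, ?_, rfl⟩ ?_
  · simp
  · rintro _ ⟨F, hF, rfl⟩
    exact h F hF

lemma sValue_nonneg (T : E →L[ℂ] E) (n : ℕ) : 0 ≤ sValue T n :=
  le_sValue fun _ _ => norm_nonneg _

lemma sValue_le_add_norm_sub (S T : E →L[ℂ] E) (n : ℕ) :
    sValue S n ≤ sValue T n + ‖S - T‖ := by
  rw [← sub_le_iff_le_add]
  refine le_sValue fun F hF => ?_
  have h1 := sValue_le_norm_sub S F hF
  have h2 := norm_sub_le_norm_sub_add_norm_sub S T F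
  linarith

lemma sValue_comp_comp_le {X : E →L[ℂ] K} {Y : K →L[ℂ] E} (hX : ‖X‖ ≤ 1) (hY : ‖Y‖ ≤ 1)
    (T : E →L[ℂ] E) (n : ℕ) : sValue (X ∘L T ∘L Y) n ≤ sValue T n := by
  refine le_sValue fun F hF => ?_
  refine (sValue_le_norm_sub _ (X ∘L F ∘L Y) ?_).trans ?_
  · exact ((LinearMap.rank_comp_le_right (F ∘L Y).toLinearMap X.toLinearMap).trans
      (LinearMap.rank_comp_le_left Y.toLinearMap F.toLinearMap)).trans hF
  · have e : X ∘L T ∘L Y - X ∘L F ∘L Y = X ∘L (T - F) ∘L Y := by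
      ext; simp
    rw [e]
    calc ‖X ∘L (T - F) ∘L Y‖ ≤ ‖X‖ * (‖T - F‖ * ‖Y‖) :=
          (X.opNorm_comp_le _).trans (by gcongr; exact (T - F).opNorm_comp_le Y)
      _ ≤ 1 * (‖T - F‖ * 1) := by gcongr
      _ = ‖T - F‖ := by ring

end ApproximationNumbers

section FiniteDimensional

variable {W : Type} [NormedAddCommGroup W] [InnerProductSpace ℂ W] {ι : Type*} [Fintype ι]

/-- The operator `∑ a_j ⟨v_j, ·⟩ u_j`. -/
noncomputable def diagOp (u v : OrthonormalBasis ι ℂ W) (a : ι → ℂ) : W →L[ℂ] W :=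
  ∑ j, a j • InnerProductSpace.rankOne ℂ (u j) (v j)

lemma diagOp_apply (u v : OrthonormalBasis ι ℂ W) (a : ι → ℂ) (x : W) :
    diagOp u v a x = ∑ j, (a j * ⟪v j, x⟫_ℂ) • u j := by
  simp [diagOp, smul_smul]

lemma diagOp_sub (u v : OrthonormalBasis ι ℂ W) (a b : ι → ℂ) :
    diagOp u v a - diagOp u v b = diagOp u v (a - b) := by
  simp [diagOp, sub_smul]

lemma inner_diagOp_apply (u v : OrthonormalBasis ι ℂ W) (a : ι → ℂ) (x y : W) :
    ⟪y, diagOp u v a x⟫_ℂ = ∑ j, ⟪y, u j⟫_ℂ * ⟪v j, x⟫_ℂ * a j := by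
  rw [diagOp_apply, inner_sum]
  refine Finset.sum_congr rfl fun j _ => ?_
  rw [inner_smul_right]
  ring

lemma norm_sq_diagOp_apply (u v : OrthonormalBasis ι ℂ W) (a : ι → ℂ) (x : W) :
    ‖diagOp u v a x‖ ^ 2 = ∑ j, ‖a j‖ ^ 2 * ‖⟪v j, x⟫_ℂ‖ ^ 2 := by
  classical
  rw [← u.sum_sq_norm_inner_right]
  refine Finset.sum_congr rfl fun k _ => ?_
  rw [diagOp_apply, u.orthonormal.inner_right_fintype, norm_mul, mul_pow]

lemma norm_diagOp_le (u v : OrthonormalBasis ι ℂ W) {a : ι → ℂ} {M : ℝ} (hM : 0 ≤ M)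
    (ha : ∀ j, ‖a j‖ ≤ M) : ‖diagOp u v a‖ ≤ M := by
  refine ContinuousLinearMap.opNorm_le_bound _ hM fun x => ?_
  refine le_of_sq_le_sq ?_ (by positivity)
  rw [norm_sq_diagOp_apply, mul_pow, ← v.sum_sq_norm_inner_right x, Finset.mul_sum]
  gcongr with j
  exact ha j

lemma norm_diagOp_basis (u v : OrthonormalBasis ι ℂ W) (a : ι → ℂ) (k : ι) :
    ‖diagOp u v a (v k)‖ = ‖a k‖ := by
  classical
  rw [diagOp_apply]
  simp [OrthonormalBasis.inner_eq_ite, norm_smul]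

/-- The Hilbert–Schmidt norm does not depend on the orthonormal basis. -/
lemma sum_norm_sq_apply_basis_eq [CompleteSpace W] (f g : OrthonormalBasis ι ℂ W)
    (X : W →L[ℂ] W) : ∑ k, ‖X (f k)‖ ^ 2 = ∑ k, ‖X (g k)‖ ^ 2 := by
  have h : ∀ f : OrthonormalBasis ι ℂ W,
      ∑ k, ‖X (f k)‖ ^ 2 = ∑ j, ‖X.adjoint (g j)‖ ^ 2 := by
    intro f
    simp_rw [← g.sum_sq_norm_inner_right (X _), ← f.sum_sq_norm_inner_left (X.adjoint _),
      ContinuousLinearMap.adjoint_inner_left]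
    exact Finset.sum_comm
  rw [h f, h g]

/-- **Singular value decomposition** in finite dimension. -/
lemma exists_eq_diagOp [FiniteDimensional ℂ W] (T : W →L[ℂ] W) :
    ∃ (u v : OrthonormalBasis (Fin (Module.finrank ℂ W)) ℂ W)
      (σ : Fin (Module.finrank ℂ W) → ℝ), (∀ i, 0 ≤ σ i) ∧ Antitone σ ∧
      T = diagOp u v fun i => (σ i : ℂ) := by
  set A := T.toLinearMap
  let v := A.isSymmetric_adjoint_comp_self.eigenvectorBasis rfl
  let σ : Fin (Module.finrank ℂ W) → ℝ := fun i => A.singularValues i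
  have hv : ∀ i, A.adjoint (A (v i)) = ((σ i ^ 2 : ℝ) : ℂ) • v i := fun i => by
    have := A.isSymmetric_adjoint_comp_self.apply_eigenvectorBasis rfl i
    rw [← A.sq_singularValues_fin rfl i] at this
    exact this
  have hin : ∀ i j, ⟪T (v i), T (v j)⟫_ℂ = if i = j then ((σ i ^ 2 : ℝ) : ℂ) else 0 := by
    intro i j
    have : ⟪A (v i), A (v j)⟫_ℂ = ⟪A.adjoint (A (v i)), v j⟫_ℂ := by
      rw [LinearMap.adjoint_inner_left]
    change ⟪A (v i), A (v j)⟫_ℂ = _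
    rw [this, hv, inner_smul_left, v.inner_eq_ite, Complex.conj_ofReal]
    simp
  have hon : Orthonormal ℂ
      (({i | σ i ≠ 0} : Set _).domRestrict fun i => ((σ i : ℂ)⁻¹) • T (v i)) := by
    rw [orthonormal_iff_ite]
    rintro ⟨i, hi⟩ ⟨j, hj⟩
    have hi' : (σ i : ℂ) ≠ 0 := by exact_mod_cast hi
    simp only [Set.domRestrict_apply, inner_smul_left, inner_smul_right, hin, Subtype.mk.injEq]
    split_ifs with h
    · subst h
      simp
      field_simp
    · simp
  obtain ⟨u, hu⟩ := hon.exists_orthonormalBasis_extension_of_card_eq (by simp)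
  refine ⟨u, v, σ, fun i => A.singularValues_nonneg i, fun i j h => A.singularValues_antitone h, ?_⟩
  have key : ∀ i, T (v i) = (σ i : ℂ) • u i := by
    intro i
    by_cases h : σ i = 0
    · have := hin i i
      simp only [if_true, h] at this
      simpa [h] using this
    · have h' : (σ i : ℂ) ≠ 0 := by exact_mod_cast h
      rw [hu i h, smul_smul, mul_inv_cancel₀ h', one_smul]
  ext x
  conv_lhs => rw [← v.sum_repr' x]
  rw [diagOp_apply, map_sum]
  refine Finset.sum_congr rfl fun i _ => ?_
  rw [map_smul, key, smul_smul, mul_comm]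

variable {n : ℕ} (u v : OrthonormalBasis (Fin n) ℂ W)

lemma sValue_diagOp_le {σ : Fin n → ℝ} (h0 : ∀ i, 0 ≤ σ i) (hσ : Antitone σ) (i : Fin n) :
    sValue (diagOp u v fun i => (σ i : ℂ)) i ≤ σ i := by
  classical
  let a : Fin n → ℂ := fun j => if j < i then (σ j : ℂ) else 0
  refine (sValue_le_norm_sub _ (diagOp u v a) ?_).trans ?_
  · have hsub : LinearMap.range (diagOp u v a).toLinearMap ≤
        Submodule.span ℂ ((Finset.Iio i).image u : Finset W) := by
      rintro _ ⟨x, rfl⟩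
      change diagOp u v a x ∈ _
      rw [diagOp_apply]
      refine Submodule.sum_mem _ fun j _ => ?_
      by_cases h : j < i
      · exact Submodule.smul_mem _ _ (Submodule.subset_span (by simpa using ⟨j, h, rfl⟩))
      · simp [a, h]
    refine (Submodule.rank_mono hsub).trans ((rank_span_finset_le _).trans ?_)
    exact Nat.cast_le.2 (Finset.card_image_le.trans (Fin.card_Iio i).le)
  · rw [diagOp_sub]
    refine norm_diagOp_le u v (h0 i) fun j => ?_
    by_cases h : j < i
    · simpa [a, h] using h0 i
    · simpa [a, h, abs_of_nonneg (h0 j)] using hσ (not_lt.1 h)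

lemma le_sValue_diagOp [FiniteDimensional ℂ W] {σ : Fin n → ℝ} (h0 : ∀ i, 0 ≤ σ i)
    (hσ : Antitone σ) (i : Fin n) :
    σ i ≤ sValue (diagOp u v fun i => (σ i : ℂ)) i := by
  refine le_sValue fun F hF => ?_
  let G : W →ₗ[ℂ] LinearMap.range F.toLinearMap × ({j // i < j} → ℂ) :=
    F.toLinearMap.rangeRestrict.prod (LinearMap.pi fun j => (innerSL ℂ (v j)).toLinearMap)
  have hlt : Module.finrank ℂ (LinearMap.range F.toLinearMap × ({j // i < j} → ℂ)) <
      Module.finrank ℂ W := by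
    have h1 : Module.finrank ℂ (LinearMap.range F.toLinearMap) ≤ i :=
      Module.finrank_le_of_rank_le hF
    have h2 : Fintype.card {j // i < j} = n - 1 - i := by
      rw [← Fin.card_Ioi, Fintype.card_subtype]
      congr 1
      ext j
      simp
    rw [Module.finrank_prod, Module.finrank_fintype_fun_eq_card, h2,
      Module.finrank_eq_card_basis v.toBasis, Fintype.card_fin]
    omega
  obtain ⟨x, hx, hx0⟩ := (Submodule.ne_bot_iff _).1 (LinearMap.ker_ne_bot_of_finrank_lt (f := G) hlt)
  have hG : G x = 0 := hx
  have hFx : F x = 0 := congrArg Subtype.val (congrArg Prod.fst hG)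
  have hvx : ∀ j, i < j → ⟪v j, x⟫_ℂ = 0 := fun j hj => congrFun (congrArg Prod.snd hG) ⟨j, hj⟩
  have hpos : 0 < ‖x‖ := norm_pos_iff.2 hx0
  refine le_of_mul_le_mul_right ?_ hpos
  refine le_trans ?_ (ContinuousLinearMap.le_opNorm _ x)
  rw [sub_apply, hFx, sub_zero]
  refine le_of_sq_le_sq ?_ (norm_nonneg _)
  rw [norm_sq_diagOp_apply, mul_pow, ← v.sum_sq_norm_inner_right x, Finset.mul_sum]
  refine Finset.sum_le_sum fun j _ => ?_
  rcases lt_or_ge i j with h | h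
  · simp [hvx j h]
  · have := hσ h
    have := h0 i
    rw [Complex.norm_real, Real.norm_of_nonneg (h0 j)]
    gcongr

/-- Clarkson's inequality for finite families of singular values. -/
lemma sum_rpow_add_sum_rpow_le [FiniteDimensional ℂ W] {p q : ℝ} (hp : 2 ≤ p) (hq : q = p / (p - 1))
    (u₁ v₁ u₂ v₂ e f g h : OrthonormalBasis (Fin n) ℂ W) {a b c d : Fin n → ℝ}
    (ha : ∀ i, 0 ≤ a i) (hb : ∀ i, 0 ≤ b i) (hc : ∀ i, 0 ≤ c i) (hd : ∀ i, 0 ≤ d i)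
    (hadd : diagOp u₁ v₁ (fun i => (a i : ℂ)) + diagOp u₂ v₂ (fun i => (b i : ℂ)) =
      diagOp e f fun i => (c i : ℂ))
    (hsub : diagOp u₁ v₁ (fun i => (a i : ℂ)) - diagOp u₂ v₂ (fun i => (b i : ℂ)) =
      diagOp g h fun i => (d i : ℂ)) :
    ∑ i, c i ^ p + ∑ i, d i ^ p ≤
      2 * ((∑ i, a i ^ p) ^ (q / p) + (∑ i, b i ^ p) ^ (q / p)) ^ (p / q) := by
  have := FiniteDimensional.complete ℂ W
  let P : Fin n ⊕ Fin n → Fin n → ℂ := Sum.elim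
    (fun k i => ⟪e k, u₁ i⟫_ℂ * ⟪v₁ i, f k⟫_ℂ) (fun k i => ⟪g k, u₁ i⟫_ℂ * ⟪v₁ i, h k⟫_ℂ)
  let Q : Fin n ⊕ Fin n → Fin n → ℂ := Sum.elim
    (fun k i => ⟪e k, u₂ i⟫_ℂ * ⟪v₂ i, f k⟫_ℂ) (fun k i => -(⟪g k, u₂ i⟫_ℂ * ⟪v₂ i, h k⟫_ℂ))
  have hl : ∀ (a b : Fin n → ℂ) k, ∑ i, P (Sum.inl k) i * a i + ∑ i, Q (Sum.inl k) i * b i =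
      ⟪e k, (diagOp u₁ v₁ a + diagOp u₂ v₂ b) (f k)⟫_ℂ := fun a b k => by
    simp only [P, Q, Sum.elim_inl, add_apply, inner_add_right,
      inner_diagOp_apply]
  have hr : ∀ (a b : Fin n → ℂ) k, ∑ i, P (Sum.inr k) i * a i + ∑ i, Q (Sum.inr k) i * b i =
      ⟪g k, (diagOp u₁ v₁ a - diagOp u₂ v₂ b) (h k)⟫_ℂ := fun a b k => by
    simp only [P, Q, Sum.elim_inr, sub_apply, inner_sub_right,
      inner_diagOp_apply, neg_mul, Finset.sum_neg_distrib, ← sub_eq_add_neg]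
  have hle : ∀ (e f : OrthonormalBasis (Fin n) ℂ W) (X : W →L[ℂ] W) k,
      ‖⟪e k, X (f k)⟫_ℂ‖ ≤ ‖X (f k)‖ := fun e f X k => by
    simpa using norm_inner_le_norm (𝕜 := ℂ) (e k) (X (f k))
  have hle' : ∀ (e f : OrthonormalBasis (Fin n) ℂ W) (X : W →L[ℂ] W) k,
      ‖⟪e k, X (f k)⟫_ℂ‖ ≤ ‖X‖ := fun e f X k =>
    (hle e f X k).trans (by simpa using X.le_opNorm (f k))
  have hdiag : ∀ (e f : OrthonormalBasis (Fin n) ℂ W) (c : Fin n → ℝ) (k : Fin n), 0 ≤ c k →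
      ‖⟪e k, diagOp e f (fun i => (c i : ℂ)) (f k)⟫_ℂ‖ = c k := fun e f c k hk => by
    rw [inner_diagOp_apply]
    simp [OrthonormalBasis.inner_eq_ite, abs_of_nonneg hk]
  have main := sum_norm_rpow_le_of_interpolation P Q ?_ ?_ hp hq a b ha hb
  · simp only [Fintype.sum_sum_type] at main
    simp only [hl, hr] at main
    rw [hadd, hsub] at main
    simpa only [hdiag _ _ _ _ (hc _), hdiag _ _ _ _ (hd _)] using main
  · intro a b α β hα hβ k
    have hn : ‖diagOp u₁ v₁ a‖ + ‖diagOp u₂ v₂ b‖ ≤ α + β := by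
      have i : Fin n := k.elim id id
      exact add_le_add (norm_diagOp_le _ _ ((norm_nonneg _).trans (hα i)) hα)
        (norm_diagOp_le _ _ ((norm_nonneg _).trans (hβ i)) hβ)
    rcases k with k | k
    · rw [hl]
      exact (hle' _ _ _ _).trans ((norm_add_le _ _).trans hn)
    · rw [hr]
      exact (hle' _ _ _ _).trans ((norm_sub_le _ _).trans hn)
  · intro a b
    simp only [Fintype.sum_sum_type, hl, hr]
    set A := diagOp u₁ v₁ a
    set B := diagOp u₂ v₂ b
    calc _ ≤ ∑ k, ‖(A + B) (f k)‖ ^ 2 + ∑ k, ‖(A - B) (h k)‖ ^ 2 := by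
          gcongr
          · exact hle _ _ _ _
          · exact hle _ _ _ _
      _ = ∑ k, ‖(A + B) (v₁ k)‖ ^ 2 + ∑ k, ‖(A - B) (v₁ k)‖ ^ 2 := by
          rw [sum_norm_sq_apply_basis_eq f v₁, sum_norm_sq_apply_basis_eq h v₁]
      _ = 2 * (∑ k, ‖A (v₁ k)‖ ^ 2 + ∑ k, ‖B (v₁ k)‖ ^ 2) := by
          simp only [← Finset.sum_add_distrib, Finset.mul_sum]
          refine Finset.sum_congr rfl fun k _ => ?_
          have := parallelogram_law_with_norm ℂ (A (v₁ k)) (B (v₁ k))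
          simp only [add_apply, sub_apply]
          linarith
      _ = 2 * (∑ i, ‖a i‖ ^ 2 + ∑ i, ‖b i‖ ^ 2) := by
          rw [sum_norm_sq_apply_basis_eq v₁ v₂ B]
          simp only [A, B, norm_diagOp_basis]

end FiniteDimensional

section Clarkson

lemma sum_range_sValue_diagOp_rpow_le {W : Type} [NormedAddCommGroup W] [InnerProductSpace ℂ W]
    {n : ℕ} (u v : OrthonormalBasis (Fin n) ℂ W) {σ : Fin n → ℝ} (h0 : ∀ i, 0 ≤ σ i)
    (hσ : Antitone σ) {p : ℝ} (hp : 0 < p) (N : ℕ) :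
    ∑ k ∈ Finset.range N, sValue (diagOp u v fun i => (σ i : ℂ)) k ^ p ≤ ∑ i, σ i ^ p := by
  set C := diagOp u v fun i => (σ i : ℂ)
  have hzero : ∀ k, sValue C (n + k) ^ p = 0 := by
    intro k
    have hrank : Module.rank ℂ (LinearMap.range C.toLinearMap) ≤ ((n + k : ℕ) : Cardinal) := by
      have := Submodule.rank_le (LinearMap.range C.toLinearMap)
      rw [rank_eq_card_basis v.toBasis, Fintype.card_fin] at this
      exact this.trans (Nat.cast_le.2 (Nat.le_add_right n k))
    have h := sValue_le_norm_sub C C hrank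
    rw [sub_self, norm_zero] at h
    rw [le_antisymm h (sValue_nonneg _ _), Real.zero_rpow hp.ne']
  calc ∑ k ∈ Finset.range N, sValue C k ^ p ≤ ∑ k ∈ Finset.range (n + N), sValue C k ^ p :=
        Finset.sum_le_sum_of_subset_of_nonneg (Finset.range_mono (Nat.le_add_left N n))
          fun k _ _ => Real.rpow_nonneg (sValue_nonneg _ _) _
    _ = ∑ i : Fin n, sValue C i ^ p := by
        rw [Finset.sum_range_add, Finset.sum_eq_zero fun k _ => hzero k, add_zero,
          Finset.sum_range]
    _ ≤ ∑ i, σ i ^ p := Finset.sum_le_sum fun i _ =>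
        Real.rpow_le_rpow (sValue_nonneg _ _) (sValue_diagOp_le u v h0 hσ i) hp.le

/-- An operator whose approximation numbers tend to zero is almost unchanged by compression to any
subspace containing a suitable finite-dimensional one. -/
lemma exists_finiteDimensional_norm_sub_compression_le {T : H →L[ℂ] H}
    (hT : Tendsto (sValue T) atTop (𝓝 0)) {ε : ℝ} (hε : 0 < ε) :
    ∃ V : Submodule ℂ H, FiniteDimensional ℂ V ∧
      ∀ (W : Submodule ℂ H) [W.HasOrthogonalProjection], V ≤ W →
        ‖T - W.starProjection ∘L T ∘L W.starProjection‖ ≤ ε := by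
  obtain ⟨n, hn⟩ := (hT.eventually_lt_const (half_pos hε)).exists
  obtain ⟨_, ⟨F, hF, rfl⟩, hTF⟩ := exists_lt_of_csInf_lt
    (show Set.Nonempty {c : ℝ | ∃ F : H →L[ℂ] H,
      Module.rank ℂ (LinearMap.range F.toLinearMap) ≤ (n : Cardinal) ∧ c = ‖T - F‖} from
      ⟨_, 0, by simp, rfl⟩) hn
  have hfin : FiniteDimensional ℂ (LinearMap.range F.toLinearMap) :=
    Module.rank_lt_aleph0_iff.1 (hF.trans_lt Cardinal.natCast_lt_aleph0)
  have hker : CompleteSpace (LinearMap.ker F.toLinearMap) := F.isClosed_ker.completeSpace_coe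
  have hfin' : FiniteDimensional ℂ (LinearMap.ker F.toLinearMap)ᗮ := by
    refine FiniteDimensional.of_injective
      (F.toLinearMap.rangeRestrict.domRestrict (LinearMap.ker F.toLinearMap)ᗮ) ?_
    rw [← LinearMap.ker_eq_bot, Submodule.eq_bot_iff]
    rintro ⟨x, hx⟩ h
    have hFx : F x = 0 := congrArg Subtype.val h
    have : x ∈ LinearMap.ker F.toLinearMap ⊓ (LinearMap.ker F.toLinearMap)ᗮ := ⟨hFx, hx⟩
    rw [Submodule.inf_orthogonal_eq_bot] at this
    exact Subtype.ext this
  refine ⟨LinearMap.range F.toLinearMap ⊔ (LinearMap.ker F.toLinearMap)ᗮ, inferInstance, ?_⟩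
  intro W _ hW
  set P := W.starProjection
  have hP : ‖P‖ ≤ 1 := W.starProjection_norm_le
  have hPF : ∀ x, P (F (P x)) = F x := by
    intro x
    have h1 : F (P x) = F x := by
      have hmem : x - P x ∈ LinearMap.ker F.toLinearMap := by
        rw [← Submodule.orthogonal_orthogonal (LinearMap.ker F.toLinearMap)]
        exact Submodule.orthogonal_le (le_sup_right.trans hW)
          (W.sub_starProjection_mem_orthogonal x)
      have : F (x - P x) = 0 := hmem
      rw [map_sub, sub_eq_zero] at this
      exact this.symm
    have h2 : F x ∈ W := hW (le_sup_left (a := LinearMap.range F.toLinearMap) ⟨x, rfl⟩)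
    rw [h1]
    exact Submodule.starProjection_eq_self_iff.2 h2
  have e : T - P ∘L T ∘L P = (T - F) - P ∘L (T - F) ∘L P := by
    ext x
    simp only [sub_apply, ContinuousLinearMap.comp_apply, map_sub]
    rw [hPF x]
    abel
  rw [e]
  calc _ ≤ ‖T - F‖ + ‖P ∘L (T - F) ∘L P‖ := norm_sub_le _ _
    _ ≤ ‖T - F‖ + ‖P‖ * (‖T - F‖ * ‖P‖) := by
        gcongr
        exact (P.opNorm_comp_le _).trans (by gcongr; exact (T - F).opNorm_comp_le P)
    _ ≤ ‖T - F‖ + 1 * (‖T - F‖ * 1) := by gcongr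
    _ ≤ ε := by linarith

lemma MemSp.tendsto_sValue {E : Type} [NormedAddCommGroup E] [InnerProductSpace ℂ E]
    {p : ℝ} (hp : 0 < p) {T : E →L[ℂ] E} (hT : MemSp p T) :
    Tendsto (sValue T) atTop (𝓝 0) := by
  have h := hT.2.tendsto_atTop_zero.rpow_const (p := 1 / p) (Or.inr (by positivity))
  rw [Real.zero_rpow (by positivity)] at h
  refine h.congr fun n => ?_
  rw [← Real.rpow_mul (sValue_nonneg _ _), mul_one_div_cancel hp.ne', Real.rpow_one]

/-- The singular values of a compression are dominated, in the `ℓ^p` sense, by those of the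
operator. -/
lemma MemSp.sum_rpow_le_tsum {E : Type} [NormedAddCommGroup E] [InnerProductSpace ℂ E]
    {p : ℝ} (hp : 0 < p) {T : E →L[ℂ] E} (hT : MemSp p T)
    {W : Type} [NormedAddCommGroup W] [InnerProductSpace ℂ W] [FiniteDimensional ℂ W]
    {X : E →L[ℂ] W} {Y : W →L[ℂ] E} (hX : ‖X‖ ≤ 1) (hY : ‖Y‖ ≤ 1) {n : ℕ}
    (u v : OrthonormalBasis (Fin n) ℂ W) {σ : Fin n → ℝ} (h0 : ∀ i, 0 ≤ σ i)
    (hσ : Antitone σ) (h : X ∘L T ∘L Y = diagOp u v fun i => (σ i : ℂ)) :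
    ∑ i, σ i ^ p ≤ ∑' k, sValue T k ^ p := by
  calc ∑ i, σ i ^ p ≤ ∑ i : Fin n, sValue T i ^ p := by
        refine Finset.sum_le_sum fun i _ => Real.rpow_le_rpow (h0 i) ?_ hp.le
        refine (le_sValue_diagOp u v h0 hσ i).trans ?_
        rw [← h]
        exact sValue_comp_comp_le hX hY T i
    _ = ∑ k ∈ Finset.range n, sValue T k ^ p := (Finset.sum_range fun k => sValue T k ^ p).symm
    _ ≤ _ := hT.2.sum_le_tsum _ fun k _ => Real.rpow_nonneg (sValue_nonneg _ _) _

lemma sum_range_sValue_rpow_add_le {p q : ℝ} (hp : 2 ≤ p) (hq : q = p / (p - 1))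
    {T₁ T₂ : H →L[ℂ] H} (hT₁ : MemSp p T₁) (hT₂ : MemSp p T₂) (N : ℕ) :
    ∑ k ∈ Finset.range N, sValue (T₁ + T₂) k ^ p + ∑ k ∈ Finset.range N, sValue (T₁ - T₂) k ^ p ≤
      2 * ((∑' k, sValue T₁ k ^ p) ^ (q / p) + (∑' k, sValue T₂ k ^ p) ^ (q / p)) ^ (p / q) := by
  have hp0 : 0 < p := by linarith
  have hq0 : 0 < q := by rw [hq]; exact div_pos hp0 (by linarith)
  have key : ∀ ε : ℝ, 0 < ε →
      ∑ k ∈ Finset.range N, max (sValue (T₁ + T₂) k - 2 * ε) 0 ^ p +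
        ∑ k ∈ Finset.range N, max (sValue (T₁ - T₂) k - 2 * ε) 0 ^ p ≤
      2 * ((∑' k, sValue T₁ k ^ p) ^ (q / p) + (∑' k, sValue T₂ k ^ p) ^ (q / p)) ^ (p / q) := by
    intro ε hε
    obtain ⟨V₁, hV₁, h₁⟩ :=
      exists_finiteDimensional_norm_sub_compression_le (hT₁.tendsto_sValue hp0) hε
    obtain ⟨V₂, hV₂, h₂⟩ :=
      exists_finiteDimensional_norm_sub_compression_le (hT₂.tendsto_sValue hp0) hε
    let W := V₁ ⊔ V₂
    have h₁ := h₁ W le_sup_left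
    have h₂ := h₂ W le_sup_right
    let X : H →L[ℂ] W := W.orthogonalProjectionOnto
    let Y : W →L[ℂ] H := W.subtypeL
    have hX : ‖X‖ ≤ 1 := W.orthogonalProjectionOnto_norm_le
    have hY : ‖Y‖ ≤ 1 := W.norm_subtypeL_le
    obtain ⟨u₁, v₁, a, ha, ha', hA⟩ := exists_eq_diagOp (X ∘L T₁ ∘L Y)
    obtain ⟨u₂, v₂, b, hb, hb', hB⟩ := exists_eq_diagOp (X ∘L T₂ ∘L Y)
    obtain ⟨e, f, c, hc, hc', hC⟩ := exists_eq_diagOp (X ∘L (T₁ + T₂) ∘L Y)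
    obtain ⟨g, h, d, hd, hd', hD⟩ := exists_eq_diagOp (X ∘L (T₁ - T₂) ∘L Y)
    have hfin := sum_rpow_add_sum_rpow_le hp hq u₁ v₁ u₂ v₂ e f g h ha hb hc hd
      (by rw [← hA, ← hB, ← hC]; ext x; simp) (by rw [← hA, ← hB, ← hD]; ext x; simp)
    have hcomp : ∀ S : H →L[ℂ] H,
        ‖S - W.starProjection ∘L S ∘L W.starProjection‖ ≤ 2 * ε →
        ∀ k, max (sValue S k - 2 * ε) 0 ^ p ≤ sValue (X ∘L S ∘L Y) k ^ p := by
      intro S hS k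
      refine Real.rpow_le_rpow (le_max_right _ _) (max_le ?_ (sValue_nonneg _ _)) hp0.le
      have e1 := sValue_le_add_norm_sub S (W.starProjection ∘L S ∘L W.starProjection) k
      have e2 : sValue (W.starProjection ∘L S ∘L W.starProjection) k ≤
          sValue (X ∘L S ∘L Y) k := sValue_comp_comp_le hY hX (X ∘L S ∘L Y) k
      linarith
    have hadd : ‖(T₁ + T₂) - W.starProjection ∘L (T₁ + T₂) ∘L W.starProjection‖ ≤ 2 * ε := by
      have : (T₁ + T₂) - W.starProjection ∘L (T₁ + T₂) ∘L W.starProjection =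
          (T₁ - W.starProjection ∘L T₁ ∘L W.starProjection) +
            (T₂ - W.starProjection ∘L T₂ ∘L W.starProjection) := by
        ext x
        simp only [add_apply, sub_apply, ContinuousLinearMap.comp_apply, map_add]
        abel
      rw [this]
      exact (norm_add_le _ _).trans (by linarith)
    have hsub : ‖(T₁ - T₂) - W.starProjection ∘L (T₁ - T₂) ∘L W.starProjection‖ ≤ 2 * ε := by
      have : (T₁ - T₂) - W.starProjection ∘L (T₁ - T₂) ∘L W.starProjection =
          (T₁ - W.starProjection ∘L T₁ ∘L W.starProjection) -
            (T₂ - W.starProjection ∘L T₂ ∘L W.starProjection) := by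
        ext x
        simp only [sub_apply, ContinuousLinearMap.comp_apply, map_sub]
        abel
      rw [this]
      exact (norm_sub_le _ _).trans (by linarith)
    have ha0 : 0 ≤ ∑ i, a i ^ p := Finset.sum_nonneg fun i _ => Real.rpow_nonneg (ha i) _
    have hb0 : 0 ≤ ∑ i, b i ^ p := Finset.sum_nonneg fun i _ => Real.rpow_nonneg (hb i) _
    calc _ ≤ ∑ k ∈ Finset.range N, sValue (X ∘L (T₁ + T₂) ∘L Y) k ^ p +
          ∑ k ∈ Finset.range N, sValue (X ∘L (T₁ - T₂) ∘L Y) k ^ p :=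
          add_le_add (Finset.sum_le_sum fun k _ => hcomp _ hadd k)
            (Finset.sum_le_sum fun k _ => hcomp _ hsub k)
      _ ≤ ∑ i, c i ^ p + ∑ i, d i ^ p := by
          rw [hC, hD]
          exact add_le_add (sum_range_sValue_diagOp_rpow_le e f hc hc' hp0 N)
            (sum_range_sValue_diagOp_rpow_le g h hd hd' hp0 N)
      _ ≤ _ := hfin
      _ ≤ _ := by
          have := hT₁.sum_rpow_le_tsum hp0 hX hY u₁ v₁ ha ha' hA
          have := hT₂.sum_rpow_le_tsum hp0 hX hY u₂ v₂ hb hb' hB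
          gcongr
  have hcont : ∀ S : H →L[ℂ] H, Tendsto
      (fun ε : ℝ => ∑ k ∈ Finset.range N, max (sValue S k - 2 * ε) 0 ^ p) (𝓝[>] 0)
      (𝓝 (∑ k ∈ Finset.range N, sValue S k ^ p)) := by
    intro S
    have hc : Continuous fun ε : ℝ => ∑ k ∈ Finset.range N, max (sValue S k - 2 * ε) 0 ^ p :=
      continuous_finsetSum _ fun k _ =>
        Continuous.rpow_const (by fun_prop) fun _ => Or.inr hp0.le
    have ht := (hc.tendsto 0).mono_left (nhdsWithin_le_nhds (s := Set.Ioi 0))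
    simpa [max_eq_left (sValue_nonneg S _)] using ht
  exact le_of_tendsto ((hcont _).add (hcont _))
    (eventually_nhdsWithin_of_forall fun ε hε => key ε hε)

lemma schattenNorm_rpow {E : Type} [NormedAddCommGroup E] [InnerProductSpace ℂ E]
    (p : ℝ) (T : E →L[ℂ] E) (r : ℝ) :
    schattenNorm p T ^ r = (∑' k, sValue T k ^ p) ^ (r / p) := by
  have h : 0 ≤ ∑' k, sValue T k ^ p := tsum_nonneg fun k => Real.rpow_nonneg (sValue_nonneg _ _) _
  rw [schattenNorm, ← Real.rpow_mul h, one_div_mul_eq_div]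

end Clarkson

/-- Clarkson inequality for Schatten classes, case `2 ≤ p < ∞`:
`(‖T₁+T₂‖_p^p + ‖T₁−T₂‖_p^p)^(1/p) ≤ 2^(1/p) (‖T₁‖_p^q + ‖T₂‖_p^q)^(1/q)`. -/
theorem stmt12 {H : Type} [NormedAddCommGroup H] [InnerProductSpace ℂ H]
    [CompleteSpace H] [TopologicalSpace.SeparableSpace H]
    (p q : ℝ) (hp : 2 ≤ p) (hq : q = p / (p - 1))
    (T₁ T₂ : H →L[ℂ] H) (hT₁ : MemSp p T₁) (hT₂ : MemSp p T₂) :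
    (schattenNorm p (T₁ + T₂) ^ p + schattenNorm p (T₁ - T₂) ^ p) ^ (1 / p) ≤
      (2 : ℝ) ^ (1 / p) * (schattenNorm p T₁ ^ q + schattenNorm p T₂ ^ q) ^ (1 / q) := by
  have hp0 : 0 < p := by linarith
  have hq0 : 0 < q := by rw [hq]; exact div_pos hp0 (by linarith)
  have hnn : ∀ (T : H →L[ℂ] H) k, 0 ≤ sValue T k ^ p := fun T k =>
    Real.rpow_nonneg (sValue_nonneg _ _) _
  simp only [schattenNorm_rpow, div_self hp0.ne', Real.rpow_one]
  have hpart := sum_range_sValue_rpow_add_le hp hq hT₁ hT₂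
  set N := (∑' k, sValue T₁ k ^ p) ^ (q / p) + (∑' k, sValue T₂ k ^ p) ^ (q / p)
  have hN0 : 0 ≤ N := add_nonneg (Real.rpow_nonneg (tsum_nonneg (hnn T₁)) _)
    (Real.rpow_nonneg (tsum_nonneg (hnn T₂)) _)
  have hsum₁ : Summable fun k => sValue (T₁ + T₂) k ^ p :=
    summable_of_sum_range_le (hnn _) fun n =>
      (le_add_of_nonneg_right (Finset.sum_nonneg fun k _ => hnn _ k)).trans (hpart n)
  have hsum₂ : Summable fun k => sValue (T₁ - T₂) k ^ p :=
    summable_of_sum_range_le (hnn _) fun n =>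
      (le_add_of_nonneg_left (Finset.sum_nonneg fun k _ => hnn _ k)).trans (hpart n)
  have htot : ∑' k, sValue (T₁ + T₂) k ^ p + ∑' k, sValue (T₁ - T₂) k ^ p ≤ 2 * N ^ (p / q) :=
    le_of_tendsto' (hsum₁.hasSum.tendsto_sum_nat.add hsum₂.hasSum.tendsto_sum_nat) hpart
  calc _ ≤ (2 * N ^ (p / q)) ^ (1 / p) :=
        Real.rpow_le_rpow (add_nonneg (tsum_nonneg (hnn _)) (tsum_nonneg (hnn _))) htot
          (by positivity)
    _ = 2 ^ (1 / p) * N ^ (1 / q) := by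
        rw [Real.mul_rpow zero_le_two (by positivity), ← Real.rpow_mul hN0]
        congr 2
        field_simp
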